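/- Let P ∈ F₂[z] with P(0) = 1, 𝒜(P) the associated set, q the odd integer attached to P, r the multiplicative order of 2 modulo q, 𝒞 a coherent set of semi-bad classes modulo q, and 𝒮 the set of primes whose class modulo q lies in 𝒞. Let m be an odd positive integer not divisible by any bad prime with ω_𝒮(m) = k + 2 ≥ 2. Then 2^h·m ∉ 𝒜(P) for all 0 ≤ h ≤ k; equivalently, if 2^h·m ∈ 𝒜(P) for m odd and free of bad primes, then h ≥ ω_𝒮(m) − 1. -/

import Mathlib

/-!
Let `F = ∏_{a ∈ 𝒜} 1 / (1 - X^a)` and `θ = X d/dX`. Then `θ(F) = (∑ σ(𝒜, n) X^n) F` with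
`σ(𝒜, n) = ∑_{d ∣ n, d ∈ 𝒜} d` (`theta_genA`).

**Invariance** (`sigmaA_class`). Modulo `2^(h+1)`, the number `σ(𝒜, 2^h n)` is unchanged when `n`
is doubled (`sigmaA_two_mul`) or replaced by an integer in the same class modulo `q`. For the
latter, let `H ∈ ℤ[X]` lift `P`. Since `F ≡ H (mod 2)`, the coefficients at `N` of the logarithmic
derivatives of `F` and `H` agree modulo `2^(v₂(N)+1)` (`two_pow_dvd_coeff_logDeriv`). As `P`
divides some `X^(q 2^M) - 1` modulo `2`, `H` divides `X^(q 2^(M+h)) - 1` modulo `2^(h+1)`, so the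
coefficients of `θ(H) / H` are eventually periodic modulo `2^(h+1)` with period `q 2^(M+h)`.
Multiplying the arguments by a large power of `2` turns this into periodicity modulo `q` in `n`.

**Inclusion–exclusion** (`mul_dyadicSum_eq_zero`). For odd `n`, `σ(𝒜, 2^h n) = ∑_{d ∣ n} d S(d)`
with `S(d) = ∑_{i ≤ h} 2^i χ(2^i d)`. Let `T` be the set of the `k + 2` primes of `𝒮` dividing `m`.
By coherence and the invariance above, `σ(𝒜, 2^h m / ∏ U)` for `U ⊆ T` depends modulo `2^(h+1)`
only on the parity of `#U`. Hence the alternating sum over `U ⊆ T` is a multiple of `2^(k+1)`. It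
equals the sum of `d S(d)` over the divisors `d` of `m` with `v_p(d) = v_p(m)` for `p ∈ T`, and
induction on `m` gives `m S(m) ≡ 0 (mod 2^(h+1))` when `h ≤ k`. As `m` is odd and
`0 ≤ S(m) < 2^(h+1)`, this forces `S(m) = 0`, so `2^h m ∉ 𝒜`.
-/

open Polynomial

/-- Number of partitions of `n` with all parts in `A` (this is `1` for `n = 0`). -/
noncomputable def partitionCount (A : Set ℕ) (n : ℕ) : ℕ :=
  Nat.card {p : n.Partition // ∀ i ∈ p.parts, i ∈ A}

/-- The odd integer `q = q(P)` attached to `P`: the lcm of the orders of the irreducible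
factors of `P`, characterized as the least `m > 0` such that every irreducible factor of `P`
divides `X ^ m - 1` over `F₂`. -/
noncomputable def qOf (P : Polynomial (ZMod 2)) : ℕ :=
  sInf {m | 0 < m ∧ ∀ Q : Polynomial (ZMod 2), Irreducible Q → Q ∣ P → Q ∣ X ^ m - 1}

/-- The set `E(q)` of bad classes: the powers `2^i`, `0 ≤ i ≤ r - 1`, in `ℤ/qℤ`,
where `r` is the multiplicative order of `2` modulo `q`. -/
def badE (q : ℕ) : Set (ZMod q) := {x | ∃ i < orderOf (2 : ZMod q), x = 2 ^ i}

/-- A class of `(ℤ/qℤ)*` is semi-bad if it does not belong to `E(q)` but its square does. -/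
def SemiBad (q : ℕ) (x : ZMod q) : Prop := IsUnit x ∧ x ∉ badE q ∧ x ^ 2 ∈ badE q

/-- A set of semi-bad classes is coherent if it is nonempty and the product of any two of
its elements is a bad class. -/
def Coherent (q : ℕ) (C : Set (ZMod q)) : Prop :=
  C.Nonempty ∧ (∀ x ∈ C, SemiBad q x) ∧ ∀ x ∈ C, ∀ y ∈ C, x * y ∈ badE q

/-- `p` is a bad prime: an odd prime whose class modulo `q` is a bad class. -/
def IsBadPrime (q p : ℕ) : Prop :=
  p.Prime ∧ p ≠ 2 ∧ (p : ZMod q) ∈ badE q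

/-- `ω_𝒮(n)`: the number of distinct prime divisors of `n` belonging to `S`. -/
noncomputable def omegaS (S : Set ℕ) (n : ℕ) : ℕ :=
  Set.ncard {p | p.Prime ∧ p ∣ n ∧ p ∈ S}


/-! ### The logarithmic derivative of the generating function -/

/-- The Euler operator `X d/dX` on integer power series. -/
noncomputable def theta : Derivation ℤ (PowerSeries ℤ) (PowerSeries ℤ) :=
  (PowerSeries.X : PowerSeries ℤ) • PowerSeries.derivative ℤ

lemma theta_apply (f : PowerSeries ℤ) :
    theta f = PowerSeries.X * PowerSeries.derivative ℤ f := rfl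

lemma coeff_theta (f : PowerSeries ℤ) (n : ℕ) :
    PowerSeries.coeff n (theta f) = n * PowerSeries.coeff n f := by
  cases n with
  | zero => simp [theta_apply]
  | succ n =>
    rw [theta_apply, PowerSeries.coeff_succ_X_mul, PowerSeries.coeff_derivative]
    push_cast
    ring

/-- The power series `∑_{j ≥ 1} a X^{aj}`, the logarithmic `theta`-derivative of
`1 / (1 - X^a)`. -/
noncomputable def lambert (a : ℕ) : PowerSeries ℤ :=
  PowerSeries.mk fun n => if a ∣ n ∧ n ≠ 0 then (a : ℤ) else 0

lemma lambert_mul (a : ℕ) (ha : 0 < a) :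
    lambert a * (1 - PowerSeries.X ^ a) = (a : PowerSeries ℤ) * PowerSeries.X ^ a := by
  have hC : (a : PowerSeries ℤ) = PowerSeries.C (a : ℤ) := by simp
  ext n
  rw [mul_sub, mul_one, map_sub, PowerSeries.coeff_mul_X_pow', hC, PowerSeries.coeff_C_mul,
    PowerSeries.coeff_X_pow]
  simp only [lambert, PowerSeries.coeff_mk]
  rcases lt_trichotomy n a with h | h | h
  · have h1 : ¬ (a ∣ n ∧ n ≠ 0) := fun ⟨h1, h2⟩ =>
      absurd (Nat.le_of_dvd (Nat.pos_of_ne_zero h2) h1) (by omega)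
    simp [h1, h.ne, not_le.2 h]
  · subst h
    simp [ha.ne']
  · have h1 : a ∣ n - a ↔ a ∣ n := by
      rw [Nat.dvd_sub_iff_left h.le dvd_rfl]
    have h2 : n - a ≠ 0 := by omega
    have h3 : n ≠ 0 := by omega
    simp [h1, h2, h3, h.le, h.ne']

/-- `σ(𝒜, n)`: the sum of the divisors of `n` belonging to `A`. -/
noncomputable def sigmaA (A : Set ℕ) (n : ℕ) : ℤ :=
  open Classical in ∑ d ∈ n.divisors, if d ∈ A then (d : ℤ) else 0

lemma theta_prod (A : Set ℕ) (g : ℕ → PowerSeries ℤ)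
    (hg : ∀ i, theta (g i) = (open Classical in if i + 1 ∈ A then lambert (i + 1) else 0) * g i)
    (s : Finset ℕ) :
    theta (∏ i ∈ s, g i) =
      (∑ i ∈ s, open Classical in if i + 1 ∈ A then lambert (i + 1) else 0) * ∏ i ∈ s, g i := by
  classical
  induction s using Finset.induction_on with
  | empty => simp
  | insert i s hi ih =>
    rw [Finset.prod_insert hi, Finset.sum_insert hi, Derivation.leibniz, ih, hg]
    simp only [smul_eq_mul]
    ring

lemma coeff_sum_lambert (A : Set ℕ) (n : ℕ) (s : Finset ℕ)
    (hs : Finset.range n ⊆ s) :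
    PowerSeries.coeff n
      (∑ i ∈ s, open Classical in if i + 1 ∈ A then lambert (i + 1) else 0) = sigmaA A n := by
  classical
  rw [map_sum, sigmaA]
  have h0 : ∀ i, PowerSeries.coeff n (if i + 1 ∈ A then lambert (i + 1) else 0)
      = if (i + 1) ∈ n.divisors then (if i + 1 ∈ A then ((i + 1 : ℕ) : ℤ) else 0) else 0 := by
    intro i
    by_cases h : i + 1 ∈ A <;> simp [h, lambert]
  simp_rw [h0]
  rw [← Finset.sum_filter]
  refine Finset.sum_bij' (fun i _ => i + 1) (fun d _ => d - 1) ?_ ?_ ?_ ?_ ?_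
  · intro i hi
    exact (Finset.mem_filter.1 hi).2
  · intro d hd
    have h1 := Nat.pos_of_mem_divisors hd
    have h2 := Nat.divisor_le hd
    refine Finset.mem_filter.2 ⟨hs (Finset.mem_range.2 (by omega)), ?_⟩
    rwa [Nat.sub_add_cancel h1]
  · intro i _; simp
  · intro d hd
    exact Nat.sub_add_cancel (Nat.pos_of_mem_divisors hd)
  · intro i _; rfl

/-- The generating function of partitions with parts in `A`. -/
noncomputable def genA (A : Set ℕ) : PowerSeries ℤ :=
  PowerSeries.mk fun n => (partitionCount A n : ℤ)

open scoped PowerSeries.WithPiTopology in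
/-- The logarithmic `theta`-derivative of the generating function of partitions with parts in `A`
is `∑ σ(𝒜, n) X^n`, i.e. `n p(n) = ∑ σ(𝒜, j) p(n - j)`. Each coefficient only sees a finite part
of the infinite product over `A`. -/
lemma theta_genA (A : Set ℕ) :
    theta (genA A) = PowerSeries.mk (sigmaA A) * genA A := by
  classical
  let _ : TopologicalSpace ℤ := ⊥
  have _ : DiscreteTopology ℤ := ⟨rfl⟩
  have hF : genA A = PowerSeries.mk fun n =>
      ((Nat.Partition.restricted n (· ∈ A)).card : ℤ) := by
    ext n
    simp [genA, partitionCount, Nat.Partition.restricted, Fintype.card_subtype]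
  have hprod := Nat.Partition.hasProd_powerSeriesMk_card_restricted ℤ (· ∈ A)
  rw [← hF] at hprod
  set g : ℕ → PowerSeries ℤ := fun i => if i + 1 ∈ A then
    ∑' j : ℕ, PowerSeries.X ^ ((i + 1) * j) else 1 with hgdef
  have hg : ∀ i, theta (g i) = (if i + 1 ∈ A then lambert (i + 1) else 0) * g i := by
    intro i
    by_cases hi : i + 1 ∈ A
    · simp only [hgdef, hi, if_true]
      simp_rw [pow_mul]
      have h1 := PowerSeries.WithPiTopology.tsum_pow_mul_one_sub_of_constantCoeff_eq_zero
        (f := (PowerSeries.X : PowerSeries ℤ) ^ (i + 1)) (by simp)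
      set G : PowerSeries ℤ := ∑' j : ℕ, (PowerSeries.X ^ (i + 1)) ^ j
      have h2 := congrArg theta h1
      have h3 : theta (PowerSeries.X ^ (i + 1)) =
          ((i + 1 : ℕ) : PowerSeries ℤ) * PowerSeries.X ^ (i + 1) := by
        rw [theta_apply, PowerSeries.derivative_pow, PowerSeries.derivative_X,
          Nat.add_sub_cancel]
        ring
      rw [Derivation.leibniz, map_sub, h3] at h2
      simp only [Derivation.map_one_eq_zero, smul_eq_mul] at h2
      have h4 := lambert_mul (i + 1) (Nat.succ_pos i)
      linear_combination (-theta G + G * lambert (i+1)) * h1 + G * h2 - G * G * h4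
    · simp [hgdef, hi]
  ext n
  have hT := (PowerSeries.WithPiTopology.tendsto_iff_coeff_tendsto _ _ _ _).1 hprod
  have hev : ∀ᶠ s : Finset ℕ in Filter.atTop, Finset.range n ⊆ s ∧
      ∀ m ∈ Finset.range (n + 1),
        PowerSeries.coeff m (∏ i ∈ s, g i) = PowerSeries.coeff m (genA A) := by
    refine (Filter.eventually_ge_atTop (Finset.range n)).and ?_
    rw [Filter.eventually_all_finset]
    intro m _
    have := hT m
    rw [nhds_discrete, Filter.tendsto_pure] at this
    exact this
  obtain ⟨s, hs, hc⟩ := hev.exists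
  have h1 := congrArg (PowerSeries.coeff n) (theta_prod A g hg s)
  rw [coeff_theta, hc n (by simp), ← coeff_theta] at h1
  rw [h1, PowerSeries.coeff_mul, PowerSeries.coeff_mul]
  refine Finset.sum_congr rfl fun x hx => ?_
  have hx' := Finset.HasAntidiagonal.mem_antidiagonal.1 hx
  rw [hc x.2 (Finset.mem_range.2 (by omega)), coeff_sum_lambert, PowerSeries.coeff_mk]
  exact (Finset.range_subset_range.2 (by omega)).trans hs

/-! ### Logarithmic derivatives modulo powers of 2 -/

lemma two_pow_dvd_coeff_pow_mul_theta (K : PowerSeries ℤ) (h n j : ℕ) :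
    (2 : ℤ) ^ (h + 1) ∣
      2 ^ (j + 1) * PowerSeries.coeff (2 ^ h * n) (K ^ j * theta K) := by
  set x := PowerSeries.coeff (2 ^ h * n) (K ^ j * theta K) with hx
  have h1 : ((j : ℤ) + 1) * x = 2 ^ h * n * PowerSeries.coeff (2 ^ h * n) (K ^ (j + 1)) := by
    have h2 := coeff_theta (K ^ (j + 1)) (2 ^ h * n)
    have h3 : theta (K ^ (j + 1)) = PowerSeries.C ((j : ℤ) + 1) * (K ^ j * theta K) := by
      rw [theta_apply, PowerSeries.derivative_pow, theta_apply, Nat.add_sub_cancel]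
      simp
      ring
    rw [h3, PowerSeries.coeff_C_mul] at h2
    rw [hx, h2]
    push_cast
    ring
  obtain ⟨v, u, hu, hj⟩ := Nat.exists_eq_two_pow_mul_odd (n := j + 1) (by omega)
  have hv : v < j + 1 := by
    calc v < 2 ^ v := Nat.lt_two_pow_self
      _ ≤ 2 ^ v * u := Nat.le_mul_of_pos_right _ hu.pos
      _ = j + 1 := hj.symm
  have hj' : (j : ℤ) + 1 = 2 ^ v * u := by exact_mod_cast hj
  have hcop : IsCoprime ((2 : ℤ) ^ (h + 1)) (u : ℤ) := by
    apply IsCoprime.pow_left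
    exact_mod_cast Nat.isCoprime_iff_coprime.2 (Nat.coprime_two_left.2 hu)
  refine hcop.dvd_of_dvd_mul_left ?_
  obtain ⟨w, hw⟩ : ∃ w, j + 1 = v + 1 + w := ⟨j - v, by omega⟩
  refine ⟨2 ^ w * n * PowerSeries.coeff (2 ^ h * n) (K ^ (j + 1)), ?_⟩
  rw [hw, ← hw]
  have : (2 : ℤ) ^ (j + 1) = 2 * 2 ^ w * 2 ^ v := by rw [hw]; ring
  rw [this]
  rw [hj'] at h1
  linear_combination 2 * 2 ^ w * h1

/-- If `U ≡ 1 (mod 2)` and `T` is the logarithmic `theta`-derivative of `U`, then the coefficient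
of `T` at `N` is divisible by `2 ^ (v₂(N) + 1)`. This is seen on
`T = ∑ (-1)^j 2^(j+1) K^j θ(K)` with `U = 1 + 2K`, since `(j + 1) K^j θ(K) = θ(K^(j+1))`. -/
lemma two_pow_dvd_coeff_logDeriv (K T : PowerSeries ℤ) (hT : theta (1 + 2 * K) = T * (1 + 2 * K))
    (h n : ℕ) : (2 : ℤ) ^ (h + 1) ∣ PowerSeries.coeff (2 ^ h * n) T := by
  have h2 : (2 : PowerSeries ℤ) = PowerSeries.C (2 : ℤ) := by simp
  have hT1 : T = 2 * theta K - 2 * K * T := by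
    have : theta (1 + 2 * K) = 2 * theta K := by
      rw [two_mul, two_mul, map_add, map_add, Derivation.map_one_eq_zero, zero_add]
    rw [this] at hT
    linear_combination -hT
  have hexp : ∀ J : ℕ, T = ∑ j ∈ Finset.range J,
      PowerSeries.C ((-1 : ℤ) ^ j * 2 ^ (j + 1)) * (K ^ j * theta K)
        + PowerSeries.C ((2 : ℤ) ^ J) * ((-K) ^ J * T) := by
    intro J
    induction J with
    | zero => simp
    | succ J ih =>
      rw [Finset.sum_range_succ]
      have e : PowerSeries.C ((2 : ℤ) ^ J) * ((-K) ^ J * T) =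
          PowerSeries.C ((-1 : ℤ) ^ J * 2 ^ (J + 1)) * (K ^ J * theta K)
          + PowerSeries.C ((2 : ℤ) ^ (J + 1)) * ((-K) ^ (J + 1) * T) := by
        rw [neg_pow K J, neg_pow K (J + 1)]
        simp only [map_mul, map_pow, ← h2, map_neg, map_one]
        linear_combination (2 ^ J * (-1) ^ J * K ^ J) * hT1
      rw [add_assoc, ← e]
      exact ih
  rw [hexp (h + 1), map_add, map_sum, PowerSeries.coeff_C_mul]
  refine dvd_add (Finset.dvd_sum fun j _ => ?_) (Dvd.intro _ rfl)
  rw [PowerSeries.coeff_C_mul, mul_assoc]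
  exact (two_pow_dvd_coeff_pow_mul_theta K h n j).mul_left _

lemma exists_dvd_pow {R : Type*} [CommRing R] [IsDomain R] [WfDvdMonoid R] (Y P : R) (hP : P ≠ 0)
    (hY : ∀ Q, Irreducible Q → Q ∣ P → Q ∣ Y) : ∃ n : ℕ, P ∣ Y ^ n := by
  induction P using WfDvdMonoid.induction_on_irreducible with
  | zero => exact absurd rfl hP
  | unit u hu => exact ⟨0, hu.dvd⟩
  | mul a i ha hi ih =>
    obtain ⟨n, hn⟩ := ih ha fun Q hQ hQa => hY Q hQ (hQa.mul_left _)
    exact ⟨n + 1, by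
      rw [pow_succ']
      exact mul_dvd_mul (hY i hi (dvd_mul_right _ _)) hn⟩

/-- If `H` divides `X ^ L - 1` modulo `2`, then it divides `X ^ (L * 2 ^ h) - 1` modulo
`2 ^ (h + 1)`: squaring `X ^ L ≡ 1` gains one power of `2`. -/
lemma exists_lift_period (H G K : Polynomial ℤ) (L : ℕ) (hHG : X ^ L - 1 = H * G + 2 * K)
    (h : ℕ) : ∃ B R : Polynomial ℤ, X ^ (L * 2 ^ h) - 1 = H * B + 2 ^ (h + 1) * R := by
  induction h with
  | zero => exact ⟨G, K, by simpa using hHG⟩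
  | succ h ih =>
    obtain ⟨B, R, hBR⟩ := ih
    refine ⟨B * (X ^ (L * 2 ^ h) + 1) + 2 ^ (h + 1) * R * B, R + 2 ^ h * R ^ 2, ?_⟩
    have e : (X : Polynomial ℤ) ^ (L * 2 ^ (h + 1)) = (X ^ (L * 2 ^ h)) ^ 2 := by ring
    rw [e]
    set Z : Polynomial ℤ := X ^ (L * 2 ^ h)
    linear_combination (Z + 1 + 2 ^ (h + 1) * R) * hBR

/-- Eventual periodicity modulo `2 ^ (h + 1)` of the logarithmic `theta`-derivative `T` of a
polynomial `H` which divides `X ^ L - 1` modulo `2 ^ (h + 1)`. -/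
lemma eventually_periodic (H B R : Polynomial ℤ) (T : PowerSeries ℤ)
    (hT : theta (H : PowerSeries ℤ) = T * H) (L h : ℕ)
    (hL : X ^ L - 1 = H * B + 2 ^ (h + 1) * R) :
    ∃ N₀, ∀ N ≥ N₀, (2 : ℤ) ^ (h + 1) ∣
      PowerSeries.coeff (N + L) T - PowerSeries.coeff N T := by
  set W : Polynomial ℤ := X * derivative H * B with hW
  have hW' : (W : PowerSeries ℤ) = T * H * B := by
    rw [hW, ← hT, theta_apply, PowerSeries.derivative_coe]
    simp
  refine ⟨W.natDegree + 1, fun N hN => ?_⟩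
  have hc := congrArg (fun p : Polynomial ℤ => (p : PowerSeries ℤ)) hL
  simp only [Polynomial.coe_sub, Polynomial.coe_pow, Polynomial.coe_X, Polynomial.coe_one,
    Polynomial.coe_add, Polynomial.coe_mul] at hc
  have h2 : (((2 : Polynomial ℤ) : PowerSeries ℤ)) ^ (h + 1) = PowerSeries.C ((2 : ℤ) ^ (h + 1)) := by
    have : ((2 : Polynomial ℤ) : PowerSeries ℤ) = PowerSeries.C (2 : ℤ) :=
      Polynomial.coe_C (2 : ℤ)
    rw [this, map_pow]
  rw [h2] at hc
  have key : T * PowerSeries.X ^ L - T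
      = (W : PowerSeries ℤ) + PowerSeries.C ((2 : ℤ) ^ (h + 1)) * (T * (R : PowerSeries ℤ)) := by
    rw [hW']
    linear_combination T * hc
  have hk := congrArg (PowerSeries.coeff (N + L)) key
  rw [map_sub, PowerSeries.coeff_mul_X_pow, map_add, PowerSeries.coeff_C_mul,
    Polynomial.coeff_coe, Polynomial.coeff_eq_zero_of_natDegree_lt (by omega), zero_add] at hk
  refine ⟨-PowerSeries.coeff (N + L) (T * (R : PowerSeries ℤ)), ?_⟩
  linear_combination -hk

lemma exists_lift (P : Polynomial (ZMod 2)) (hP : P.coeff 0 = 1) :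
    ∃ H : Polynomial ℤ, H.map (Int.castRingHom (ZMod 2)) = P ∧ H.coeff 0 = 1 := by
  obtain ⟨H₀, hH₀⟩ := Polynomial.map_surjective (Int.castRingHom (ZMod 2))
    ZMod.intCast_surjective P
  refine ⟨H₀ - C (H₀.coeff 0 - 1), ?_, by simp⟩
  have : ((H₀.coeff 0 : ℤ) : ZMod 2) = 1 := by
    rw [← hP, ← hH₀, Polynomial.coeff_map]; rfl
  rw [Polynomial.map_sub, hH₀, Polynomial.map_C]
  simp [this]

lemma exists_two_mul_of_map_eq (f g : Polynomial ℤ)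
    (hfg : f.map (Int.castRingHom (ZMod 2)) = g.map (Int.castRingHom (ZMod 2))) :
    ∃ K : Polynomial ℤ, f = g + 2 * K := by
  have : (C (2 : ℤ)) ∣ f - g := by
    rw [Polynomial.C_dvd_iff_dvd_coeff]
    intro i
    have := congrArg (fun p => Polynomial.coeff p i) hfg
    simp only [Polynomial.coeff_map, eq_intCast] at this
    rw [Polynomial.coeff_sub]
    exact_mod_cast (ZMod.intCast_eq_intCast_iff_dvd_sub _ _ 2).1 this.symm
  obtain ⟨K, hK⟩ := this
  exact ⟨K, by
    have : (C (2 : ℤ)) = 2 := rfl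
    rw [← this, ← hK]; ring⟩

/-- The divisors of `2 ^ (h + 1) N` which do not divide `2 ^ h N` are multiples of
`2 ^ (h + 1)`. -/
lemma sigmaA_two_mul (A : Set ℕ) (h N : ℕ) (hN : N ≠ 0) :
    (2 : ℤ) ^ (h + 1) ∣ sigmaA A (2 * (2 ^ h * N)) - sigmaA A (2 ^ h * N) := by
  classical
  have hsub : (2 ^ h * N).divisors ⊆ (2 * (2 ^ h * N)).divisors :=
    Nat.divisors_subset_of_dvd (by positivity) (dvd_mul_left _ _)
  unfold sigmaA
  rw [← Finset.sum_sdiff hsub, add_sub_cancel_right]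
  refine Finset.dvd_sum fun d hd => ?_
  split_ifs
  · obtain ⟨hd1, hd2⟩ := Finset.mem_sdiff.1 hd
    have hd1 := Nat.dvd_of_mem_divisors hd1
    have hd2 : ¬ d ∣ 2 ^ h * N := fun hh => hd2 (Nat.mem_divisors.2 ⟨hh, by positivity⟩)
    obtain ⟨a, u, hu, rfl⟩ := Nat.exists_eq_two_pow_mul_odd (n := d) (by
      rintro rfl
      simp [hN] at hd1)
    have : h + 1 ≤ a := by
      by_contra hlt
      apply hd2
      have hcop : ∀ b, Nat.Coprime u (2 ^ b) := fun b =>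
        (Nat.coprime_two_right.2 hu).pow_right b
      have huN : u ∣ N := by
        have h1 : u ∣ 2 * (2 ^ h * N) := (dvd_mul_left _ _).trans hd1
        rw [← mul_assoc, ← pow_succ'] at h1
        exact (hcop _).dvd_of_dvd_mul_left h1
      exact mul_dvd_mul (pow_dvd_pow 2 (by omega)) huN
    push_cast
    exact (pow_dvd_pow 2 this).mul_right _
  · exact dvd_zero _


/-! ### Invariance of `σ(𝒜, 2^h n)` modulo `2^(h+1)` -/

lemma sigmaA_two_pow_mul (A : Set ℕ) (h n j : ℕ) (hn : n ≠ 0) :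
    (2 : ℤ) ^ (h + 1) ∣ sigmaA A (2 ^ (h + j) * n) - sigmaA A (2 ^ h * n) := by
  induction j with
  | zero => simp
  | succ j ih =>
    have h1 := sigmaA_two_mul A h (2 ^ j * n) (by positivity)
    have e1 : 2 ^ h * (2 ^ j * n) = 2 ^ (h + j) * n := by ring
    have e2 : 2 * (2 ^ (h + j) * n) = 2 ^ (h + (j + 1)) * n := by ring
    rw [e1, e2] at h1
    have := dvd_add h1 ih
    rwa [sub_add_sub_cancel] at this

/-- The numbers `σ(𝒜, N)` agree modulo `2 ^ (v₂(N) + 1)` with the coefficients of the logarithmic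
`theta`-derivative `T` of any integer lift `H` of `P`, because the generating function of `A`
equals `H * (1 + 2 * K)` for some power series `K`. -/
lemma sigmaA_eq_coeff (P : Polynomial (ZMod 2)) (A : Set ℕ)
    (hA : ∀ n : ℕ, (partitionCount A n : ZMod 2) = P.coeff n)
    (H : Polynomial ℤ) (hH : H.map (Int.castRingHom (ZMod 2)) = P) (hH0 : H.coeff 0 = 1) :
    ∃ T : PowerSeries ℤ, theta (H : PowerSeries ℤ) = T * H ∧
      ∀ h n, (2 : ℤ) ^ (h + 1) ∣ sigmaA A (2 ^ h * n) - PowerSeries.coeff (2 ^ h * n) T := by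
  have hunit : IsUnit (H : PowerSeries ℤ) := by
    rw [PowerSeries.isUnit_iff_constantCoeff, Polynomial.constantCoeff_coe, hH0]
    exact isUnit_one
  obtain ⟨V, hV⟩ := hunit.exists_right_inv
  have hdiff : ∀ n, (2 : ℤ) ∣ PowerSeries.coeff n (genA A) - H.coeff n := by
    intro n
    have h1 := hA n
    rw [← hH, Polynomial.coeff_map, eq_intCast] at h1
    rw [genA, PowerSeries.coeff_mk]
    exact_mod_cast (ZMod.intCast_eq_intCast_iff_dvd_sub _ _ 2).1
      (by push_cast; exact h1.symm : ((H.coeff n : ℤ) : ZMod 2) = ((partitionCount A n : ℤ)))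
  choose k hk using hdiff
  have hF : genA A = H + 2 * PowerSeries.mk k := by
    ext n
    have : (2 : PowerSeries ℤ) = PowerSeries.C (2 : ℤ) := by simp
    rw [map_add, this, PowerSeries.coeff_C_mul, PowerSeries.coeff_mk, Polynomial.coeff_coe, ← hk]
    ring
  refine ⟨theta H * V, by linear_combination -theta H * hV, fun h n => ?_⟩
  have hU : theta (1 + 2 * (PowerSeries.mk k * V)) =
      (PowerSeries.mk (sigmaA A) - theta H * V) * (1 + 2 * (PowerSeries.mk k * V)) := by
    set U := 1 + 2 * (PowerSeries.mk k * V) with hUdef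
    have hFU : genA A = H * U := by
      rw [hF, hUdef]
      linear_combination (-2 * PowerSeries.mk k) * hV
    have h1 := theta_genA A
    rw [hFU, Derivation.leibniz, smul_eq_mul, smul_eq_mul] at h1
    linear_combination V * h1 - (theta U - PowerSeries.mk (sigmaA A) * U) * hV
  have := two_pow_dvd_coeff_logDeriv _ _ hU h n
  rwa [map_sub, PowerSeries.coeff_mk] at this

/-- Modulo `2 ^ (h + 1)`, the number `σ(𝒜, 2^h n)` depends only on `n` modulo `q`. The proof only
uses eventual periodicity with a larger period, since `n` may be multiplied by any power of `2`. -/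
lemma sigmaA_periodic (P : Polynomial (ZMod 2)) (hP : P.coeff 0 = 1) (A : Set ℕ)
    (hA : ∀ n : ℕ, (partitionCount A n : ZMod 2) = P.coeff n) (q : ℕ)
    (hq : ∀ Q : Polynomial (ZMod 2), Irreducible Q → Q ∣ P → Q ∣ X ^ q - 1)
    (h n c : ℕ) (hn : n ≠ 0) :
    (2 : ℤ) ^ (h + 1) ∣ sigmaA A (2 ^ h * (n + q * c)) - sigmaA A (2 ^ h * n) := by
  obtain ⟨H, hH, hH0⟩ := exists_lift P hP
  obtain ⟨T, hT, hσ⟩ := sigmaA_eq_coeff P A hA H hH hH0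
  have hP0 : P ≠ 0 := by
    rintro rfl
    simp at hP
  obtain ⟨M, hM⟩ := exists_dvd_pow _ P hP0 hq
  have hM' : P ∣ X ^ (q * 2 ^ M) - 1 := by
    refine hM.trans ((pow_dvd_pow _ (Nat.lt_two_pow_self (n := M)).le).trans ?_)
    rw [sub_pow_expChar_pow, one_pow, pow_mul]
  obtain ⟨G', hG'⟩ := hM'
  obtain ⟨G, hG⟩ := Polynomial.map_surjective (Int.castRingHom (ZMod 2))
    ZMod.intCast_surjective G'
  obtain ⟨K, hK⟩ := exists_two_mul_of_map_eq (X ^ (q * 2 ^ M) - 1) (H * G) (by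
    rw [Polynomial.map_mul, hH, hG, ← hG']
    simp)
  obtain ⟨B, R, hBR⟩ := exists_lift_period H G K _ hK h
  obtain ⟨N₀, hN₀⟩ := eventually_periodic H B R T hT _ h hBR
  have hper : ∀ e : ℕ, ∀ N ≥ N₀, (2 : ℤ) ^ (h + 1) ∣
      PowerSeries.coeff (N + q * 2 ^ M * 2 ^ h * e) T - PowerSeries.coeff N T := by
    intro e
    induction e with
    | zero => simp
    | succ e ih =>
      intro N hN
      have := dvd_add (hN₀ (N + q * 2 ^ M * 2 ^ h * e) (by omega)) (ih N hN)
      rwa [sub_add_sub_cancel, add_assoc, ← mul_add_one] at this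
  -- Multiplying by a large power of `2` moves both arguments into the periodic range.
  have hbig : N₀ ≤ 2 ^ (h + (M + N₀)) * n := by
    calc N₀ ≤ 2 ^ N₀ := Nat.lt_two_pow_self.le
      _ ≤ 2 ^ (h + (M + N₀)) := Nat.pow_le_pow_right (by norm_num) (by omega)
      _ ≤ _ := Nat.le_mul_of_pos_right _ (Nat.pos_of_ne_zero hn)
  have h1 := hper (c * 2 ^ N₀) _ hbig
  have e1 : 2 ^ (h + (M + N₀)) * n + q * 2 ^ M * 2 ^ h * (c * 2 ^ N₀)
      = 2 ^ (h + (M + N₀)) * (n + q * c) := by ring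
  rw [e1] at h1
  have hpow : (2 : ℤ) ^ (h + 1) ∣ 2 ^ (h + (M + N₀) + 1) := pow_dvd_pow 2 (by omega)
  have h2 := hpow.trans (hσ (h + (M + N₀)) n)
  have h3 := hpow.trans (hσ (h + (M + N₀)) (n + q * c))
  have h4 := sigmaA_two_pow_mul A h n (M + N₀) hn
  have h5 := sigmaA_two_pow_mul A h (n + q * c) (M + N₀) (by omega)
  have := dvd_add (dvd_sub (dvd_add h1 h3) h2) (dvd_sub h4 h5)
  convert! this using 1
  ring

/-- If `2^a n = 2^b n'` in `ℤ/qℤ` then `σ(𝒜, 2^h n) ≡ σ(𝒜, 2^h n') (mod 2^(h+1))`. -/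
lemma sigmaA_class (P : Polynomial (ZMod 2)) (hP : P.coeff 0 = 1) (A : Set ℕ)
    (hA : ∀ n : ℕ, (partitionCount A n : ZMod 2) = P.coeff n) (q : ℕ)
    (hq : ∀ Q : Polynomial (ZMod 2), Irreducible Q → Q ∣ P → Q ∣ X ^ q - 1)
    (h n n' a b : ℕ) (hn : n ≠ 0) (hn' : n' ≠ 0)
    (hnn' : (2 : ZMod q) ^ a * n = 2 ^ b * n') :
    ((sigmaA A (2 ^ h * n) : ℤ) : ZMod (2 ^ (h + 1))) = (sigmaA A (2 ^ h * n') : ℤ) := by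
  have cast : ∀ x y : ℤ, (2 : ℤ) ^ (h + 1) ∣ x - y → (x : ZMod (2 ^ (h + 1))) = y := by
    intro x y hxy
    rw [eq_comm, ZMod.intCast_eq_intCast_iff_dvd_sub]
    exact_mod_cast hxy
  have h1 : ∀ N j : ℕ, N ≠ 0 → ((sigmaA A (2 ^ h * (2 ^ j * N)) : ℤ) : ZMod (2 ^ (h + 1))) =
      (sigmaA A (2 ^ h * N) : ℤ) := fun N j hN => by
    rw [← mul_assoc, ← pow_add]
    exact cast _ _ (sigmaA_two_pow_mul A h N j hN)
  have h2 : ∀ N N' : ℕ, N ≠ 0 → N ≤ N' → (N : ZMod q) = N' →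
      ((sigmaA A (2 ^ h * N) : ℤ) : ZMod (2 ^ (h + 1))) = (sigmaA A (2 ^ h * N') : ℤ) := by
    intro N N' hN hle hNN
    obtain ⟨c, hc⟩ := (Nat.modEq_iff_dvd' hle).1 ((ZMod.natCast_eq_natCast_iff _ _ _).1 hNN)
    obtain rfl : N' = N + q * c := by omega
    exact (cast _ _ (sigmaA_periodic P hP A hA q hq h N c hN)).symm
  rw [← h1 n a hn, ← h1 n' b hn']
  have h3 : ((2 ^ a * n : ℕ) : ZMod q) = ((2 ^ b * n' : ℕ) : ZMod q) := by
    push_cast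
    exact hnn'
  rcases le_total (2 ^ a * n) (2 ^ b * n') with hle | hle
  · exact h2 _ _ (by positivity) hle h3
  · exact (h2 _ _ (by positivity) hle h3.symm).symm

/-- For odd `d`, the number `∑_{i ≤ h} 2^i χ(𝒜, 2^i d)`, which encodes in binary which of
`d, 2d, …, 2^h d` belong to `A`. -/
noncomputable def dyadicSum (A : Set ℕ) (h d : ℕ) : ℤ :=
  open Classical in ∑ i ∈ Finset.range (h + 1), if 2 ^ i * d ∈ A then (2 : ℤ) ^ i else 0

lemma sigmaA_eq_sum_dyadicSum (A : Set ℕ) (h n : ℕ) (hn : Odd n) :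
    sigmaA A (2 ^ h * n) = ∑ d ∈ n.divisors, (d : ℤ) * dyadicSum A h d := by
  classical
  have hn0 : n ≠ 0 := hn.pos.ne'
  unfold sigmaA dyadicSum
  simp_rw [Finset.mul_sum]
  rw [← Finset.sum_product']
  symm
  refine Finset.sum_nbij (fun x => 2 ^ x.2 * x.1) ?_ ?_ ?_ ?_
  · rintro ⟨d, i⟩ hx
    obtain ⟨hd, hi⟩ := Finset.mem_product.1 hx
    exact Nat.mem_divisors.2 ⟨mul_dvd_mul (pow_dvd_pow 2 (by simpa [Nat.lt_succ_iff] using hi))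
      (Nat.dvd_of_mem_divisors hd), by positivity⟩
  · rintro ⟨d, i⟩ hx ⟨e, j⟩ hy hxy
    have hd := Nat.dvd_of_mem_divisors (Finset.mem_product.1 hx).1
    have he := Nat.dvd_of_mem_divisors (Finset.mem_product.1 hy).1
    have hcop : ∀ u b, u ∣ n → Nat.Coprime u (2 ^ b) := fun u b hu =>
      (Nat.coprime_two_right.2 (hn.of_dvd_nat hu)).pow_right b
    dsimp only at hxy hd he
    have hde : d = e := Nat.dvd_antisymm
      ((hcop d j hd).dvd_of_dvd_mul_left (hxy ▸ dvd_mul_left _ _))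
      ((hcop e i he).dvd_of_dvd_mul_left (hxy ▸ dvd_mul_left _ _))
    subst hde
    have := Nat.eq_of_mul_eq_mul_right (hn.of_dvd_nat hd).pos hxy
    rw [Nat.pow_right_injective le_rfl this]
  · intro x hx
    obtain ⟨a, b, ha, hb, rfl⟩ := (Nat.dvd_mul).1 (Nat.dvd_of_mem_divisors hx)
    obtain ⟨i, hi, rfl⟩ := (Nat.dvd_prime_pow Nat.prime_two).1 ha
    exact ⟨(b, i), Finset.mem_coe.2 (Finset.mem_product.2 ⟨Nat.mem_divisors.2 ⟨hb, hn0⟩,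
      Finset.mem_range.2 (by omega)⟩), rfl⟩
  · rintro ⟨d, i⟩ _
    by_cases hmem : 2 ^ i * d ∈ A <;> simp [mul_comm]


/-! ### Inclusion–exclusion over the primes with classes in a coherent set -/

/-- Inclusion–exclusion: removing the primes of `T` from `m` isolates the divisors `d` of `m`
whose valuation at each `p ∈ T` equals that of `m`, the condition being written `¬ d * p ∣ m`. -/
lemma sum_powerset_sum_divisors {R : Type*} [CommRing R] (g : ℕ → R) (m : ℕ) (hm : m ≠ 0)
    (T : Finset ℕ) (hT : ∀ p ∈ T, p.Prime ∧ p ∣ m) :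
    ∑ U ∈ T.powerset, (-1 : R) ^ U.card * ∑ d ∈ (m / ∏ p ∈ U, p).divisors, g d =
      ∑ d ∈ m.divisors with ∀ p ∈ T, ¬ d * p ∣ m, g d := by
  classical
  have hprod : ∀ U ⊆ T, ∀ e : ℕ, ∏ p ∈ U, p ∣ e ↔ ∀ p ∈ U, p ∣ e := fun U hU e =>
    ⟨fun he p hp => (Finset.dvd_prod_of_mem (fun p => p) hp).trans he,
      fun he => Finset.prod_primes_dvd _ (fun p hp => (hT p (hU hp)).1.prime) he⟩
  have h1 : ∀ U ∈ T.powerset,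
      (-1 : R) ^ U.card * ∑ d ∈ (m / ∏ p ∈ U, p).divisors, g d =
      ∑ d ∈ m.divisors, if U ⊆ T.filter (fun p => d * p ∣ m) then (-1 : R) ^ U.card * g d
        else 0 := by
    intro U hU
    have hU := Finset.mem_powerset.1 hU
    rw [Finset.mul_sum, ← Finset.sum_filter]
    refine Finset.sum_congr ?_ fun _ _ => rfl
    have hUm : ∏ p ∈ U, p ∣ m := (hprod U hU m).2 fun p hp => (hT p (hU hp)).2
    have hne : m / ∏ p ∈ U, p ≠ 0 :=
      (Nat.div_pos (Nat.le_of_dvd (Nat.pos_of_ne_zero hm) hUm)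
        (Nat.pos_of_dvd_of_pos hUm (Nat.pos_of_ne_zero hm))).ne'
    ext d
    simp only [Finset.mem_filter, Nat.mem_divisors, Finset.subset_iff, hne, hm, ne_eq,
      not_false_eq_true, and_true]
    rw [Nat.dvd_div_iff_mul_dvd hUm, mul_comm]
    constructor
    · intro hd
      refine ⟨(dvd_mul_right _ _).trans hd, fun p hp => ⟨hU hp, ?_⟩⟩
      exact (mul_dvd_mul_left d (Finset.dvd_prod_of_mem (fun p => p) hp)).trans hd
    · rintro ⟨⟨e, rfl⟩, hd⟩
      have hd0 : 0 < d := Nat.pos_of_ne_zero fun h => hm (by simp [h])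
      exact mul_dvd_mul_left d ((hprod U hU e).2 fun p hp =>
        Nat.dvd_of_mul_dvd_mul_left hd0 (hd hp).2)
  rw [Finset.sum_congr rfl h1, Finset.sum_comm, Finset.sum_filter]
  refine Finset.sum_congr rfl fun d _ => ?_
  have h2 : T.powerset.filter (fun U => U ⊆ T.filter (fun p => d * p ∣ m)) =
      (T.filter (fun p => d * p ∣ m)).powerset := by
    ext U
    simp only [Finset.mem_filter, Finset.mem_powerset]
    exact ⟨fun h => h.2, fun h => ⟨h.trans (Finset.filter_subset _ _), h⟩⟩
  rw [← Finset.sum_filter, h2, ← Finset.sum_mul]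
  have h3 := congrArg (Int.cast : ℤ → R)
    (Finset.sum_powerset_neg_one_pow_card (x := T.filter (fun p => d * p ∣ m)))
  push_cast at h3
  rw [h3, ite_mul, one_mul, zero_mul]
  exact if_congr Finset.filter_eq_empty_iff rfl rfl

lemma sum_powerset_alternating {R : Type*} [CommRing R] (T : Finset ℕ) (n : ℕ)
    (hT : T.card = n + 1) (φ : Finset ℕ → R) (a b : R)
    (hφ : ∀ U ⊆ T, φ U = if Even U.card then a else b) :
    ∑ U ∈ T.powerset, (-1 : R) ^ U.card * φ U = 2 ^ n * (a - b) := by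
  classical
  obtain ⟨p, T', hp, rfl, hT'⟩ := Finset.card_eq_succ.1 hT
  rw [Finset.sum_powerset_insert hp, ← Finset.sum_add_distrib]
  have : ∀ U ∈ T'.powerset, (-1 : R) ^ U.card * φ U
      + (-1 : R) ^ (insert p U).card * φ (insert p U) = a - b := by
    intro U hU
    have hU := Finset.mem_powerset.1 hU
    rw [hφ U (hU.trans (Finset.subset_insert _ _)), hφ _ (Finset.insert_subset_insert _ hU),
      Finset.card_insert_of_notMem fun h => hp (hU h)]
    rcases Nat.even_or_odd U.card with h | h
    · have h' : ¬ Even (U.card + 1) := by simpa [Nat.even_add_one] using h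
      rw [if_pos h, if_neg h', h.neg_one_pow, (h.add_one).neg_one_pow]
      ring
    · have h' : ¬ Even U.card := by simpa using h
      rw [if_neg h', if_pos h.add_one, h.neg_one_pow, (h.add_one).neg_one_pow]
      ring
  rw [Finset.sum_congr rfl this, Finset.sum_const, Finset.card_powerset, hT', nsmul_eq_mul]
  push_cast
  rfl

/-- Products of an even number of elements of a coherent set are powers of `2`, and so are the
products of an odd number of elements with one further element. -/
lemma prod_coherent (q : ℕ) (C : Set (ZMod q)) (hC : ∀ x ∈ C, ∀ y ∈ C, ∃ i : ℕ, x * y = 2 ^ i)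
    (U : Finset ℕ) (hU : ∀ p ∈ U, (p : ZMod q) ∈ C) :
    (Even U.card → ∃ i : ℕ, ((∏ p ∈ U, p : ℕ) : ZMod q) = 2 ^ i) ∧
    (Odd U.card → ∀ x ∈ C, ∃ i : ℕ, x * ((∏ p ∈ U, p : ℕ) : ZMod q) = 2 ^ i) := by
  classical
  induction U using Finset.induction_on with
  | empty => exact ⟨fun _ => ⟨0, by simp⟩, fun h => by simp at h⟩
  | insert p U hp ih =>
    obtain ⟨ih1, ih2⟩ := ih fun p' hp' => hU p' (Finset.mem_insert_of_mem hp')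
    have hpC := hU p (Finset.mem_insert_self _ _)
    rw [Finset.card_insert_of_notMem hp, Finset.prod_insert hp]
    push_cast at ih1 ih2 ⊢
    constructor
    · intro h
      exact ih2 (by simpa [Nat.even_add_one] using h) _ hpC
    · intro h x hx
      obtain ⟨i, hi⟩ := ih1 (by simpa [Nat.odd_add_one] using h)
      obtain ⟨j, hj⟩ := hC x hx _ hpC
      exact ⟨j + i, by rw [← mul_assoc, hi, hj, pow_add]⟩

/-- If `m` is divisible by all primes of a set `T` of at least `h + 2` primes with classes in `C`,
where products of two elements of `C` are powers of `2` in `ℤ/qℤ`, then `m · dyadicSum A h m` vanishes modulo `2 ^ (h + 1)`. Strong induction on `m`: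
inclusion–exclusion over `T` expresses the sum of the same quantity over the
divisors `d` of `m` with `v_p(d) = v_p(m)` for all `p ∈ T` as a multiple of `2 ^ (h + 1)`, and
the proper divisors `d` in that sum satisfy the same hypotheses. -/
lemma mul_dyadicSum_eq_zero (P : Polynomial (ZMod 2)) (hP : P.coeff 0 = 1) (A : Set ℕ)
    (hA : ∀ n : ℕ, (partitionCount A n : ZMod 2) = P.coeff n) (q : ℕ)
    (hq : ∀ Q : Polynomial (ZMod 2), Irreducible Q → Q ∣ P → Q ∣ X ^ q - 1)
    (C : Set (ZMod q)) (hC : ∀ x ∈ C, ∀ y ∈ C, ∃ i : ℕ, x * y = 2 ^ i)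
    (h : ℕ) (T : Finset ℕ) (hTcard : h + 2 ≤ T.card)
    (hTC : ∀ p ∈ T, p.Prime ∧ (p : ZMod q) ∈ C) (m : ℕ) (hm : Odd m) (hTm : ∀ p ∈ T, p ∣ m) :
    (((m : ℤ) * dyadicSum A h m : ℤ) : ZMod (2 ^ (h + 1))) = 0 := by
  classical
  induction m using Nat.strong_induction_on with
  | _ m ih =>
  have hm0 : m ≠ 0 := hm.pos.ne'
  set g : ℕ → ZMod (2 ^ (h + 1)) := fun d => (((d : ℤ) * dyadicSum A h d : ℤ) : ZMod _) with hg
  set f : ℕ → ZMod (2 ^ (h + 1)) := fun n => ((sigmaA A (2 ^ h * n) : ℤ) : ZMod _) with hf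
  have hfg : ∀ n, Odd n → ∑ d ∈ n.divisors, g d = f n := by
    intro n hn
    rw [hf, hg]
    simp only [sigmaA_eq_sum_dyadicSum A h n hn, Int.cast_sum]
  have hUm : ∀ U ⊆ T, ∏ p ∈ U, p ∣ m := fun U hU =>
    Finset.prod_primes_dvd _ (fun p hp => (hTC p (hU hp)).1.prime) fun p hp => hTm p (hU hp)
  obtain ⟨p₀, hp₀⟩ : T.Nonempty := Finset.card_pos.1 (by omega)
  have hp₀m := Nat.div_mul_cancel (hTm p₀ hp₀)
  -- Only the parity of the number of primes removed from `m` matters.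
  have hval : ∀ U ⊆ T, f (m / ∏ p ∈ U, p) = if Even U.card then f m else f (m / p₀) := by
    intro U hU
    have hmul := Nat.div_mul_cancel (hUm U hU)
    set n := m / ∏ p ∈ U, p
    have hn0 : n ≠ 0 := fun h0 => hm0 (by rw [← hmul, h0, zero_mul])
    have hn0' : m / p₀ ≠ 0 := fun h0 => hm0 (by rw [← hp₀m, h0, zero_mul])
    obtain ⟨he, ho⟩ := prod_coherent q C hC U fun p hp => (hTC p (hU hp)).2
    have hmulq := congrArg (Nat.cast : ℕ → ZMod q) hmul
    have hp₀mq := congrArg (Nat.cast : ℕ → ZMod q) hp₀m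
    rw [Nat.cast_mul] at hmulq hp₀mq
    split_ifs with hev
    · obtain ⟨i, hi⟩ := he hev
      refine sigmaA_class P hP A hA q hq h n m i 0 hn0 hm0 ?_
      rw [← hmulq, hi]
      ring
    · obtain ⟨i, hi⟩ := ho (Nat.not_even_iff_odd.1 hev) _ (hTC p₀ hp₀).2
      obtain ⟨j, hj⟩ := hC _ (hTC p₀ hp₀).2 _ (hTC p₀ hp₀).2
      refine sigmaA_class P hP A hA q hq h n (m / p₀) i j hn0 hn0' ?_
      rw [← hi, ← hj]
      linear_combination (p₀ : ZMod q) * hmulq - (p₀ : ZMod q) * hp₀mq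
  obtain ⟨t, ht⟩ : ∃ t, T.card = (h + 1 + t) + 1 := ⟨T.card - (h + 2), by omega⟩
  have hzero : ∑ U ∈ T.powerset, (-1 : ZMod (2 ^ (h + 1))) ^ U.card *
      ∑ d ∈ (m / ∏ p ∈ U, p).divisors, g d = 0 := by
    rw [sum_powerset_alternating T _ ht _ (f m) (f (m / p₀))]
    · have : (2 : ZMod (2 ^ (h + 1))) ^ (h + 1) = 0 := by
        exact_mod_cast ZMod.natCast_self (2 ^ (h + 1))
      calc (2 : ZMod (2 ^ (h + 1))) ^ (h + 1 + t) * (f m - f (m / p₀))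
          = 2 ^ (h + 1) * (2 ^ t * (f m - f (m / p₀))) := by ring
        _ = 0 := by rw [this, zero_mul]
    · intro U hU
      rw [hfg _ (hm.of_dvd_nat (Nat.div_dvd_of_dvd (hUm U hU))), hval U hU]
  rw [sum_powerset_sum_divisors g m hm0 T fun p hp => ⟨(hTC p hp).1, hTm p hp⟩] at hzero
  have hmem : m ∈ m.divisors.filter (fun d => ∀ p ∈ T, ¬ d * p ∣ m) := by
    refine Finset.mem_filter.2 ⟨Nat.mem_divisors_self m hm0, fun p hp hd => ?_⟩
    have h1 := Nat.le_of_dvd hm.pos hd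
    have h2 := (hTC p hp).1.two_le
    have h3 := hm.pos
    nlinarith
  rw [Finset.sum_eq_single_of_mem m hmem] at hzero
  · exact hzero
  · intro d hd hdm
    obtain ⟨hd1, hd2⟩ := Finset.mem_filter.1 hd
    obtain ⟨e, rfl⟩ := Nat.dvd_of_mem_divisors hd1
    refine ih d (lt_of_le_of_ne (Nat.divisor_le hd1) hdm) (hm.of_dvd_nat (dvd_mul_right _ _))
      fun p hp => ?_
    exact ((hTC p hp).1.dvd_mul.1 (hTm p hp)).resolve_right fun hpe =>
      hd2 p hp (mul_dvd_mul_left d hpe)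

lemma dyadicSum_pos_lt (A : Set ℕ) (h m : ℕ) (hmem : 2 ^ h * m ∈ A) :
    0 < dyadicSum A h m ∧ dyadicSum A h m < 2 ^ (h + 1) := by
  classical
  unfold dyadicSum
  constructor
  · refine Finset.sum_pos' (fun i _ => by split_ifs <;> positivity)
      ⟨h, Finset.self_mem_range_succ h, ?_⟩
    rw [if_pos hmem]
    positivity
  · calc _ ≤ ∑ i ∈ Finset.range (h + 1), (2 : ℤ) ^ i :=
        Finset.sum_le_sum fun i _ => by split_ifs <;> [exact le_rfl; positivity]
      _ = 2 ^ (h + 1) - 1 := by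
        have := geom_sum_mul (2 : ℤ) (h + 1)
        linarith
      _ < _ := by linarith

/-! ### Conclusion -/

/-- If `m` is an odd positive integer, not divisible by any bad prime, with
`ω_𝒮(m) = k + 2 ≥ 2` (where `𝒮` is the set of primes whose class modulo `q(P)` lies in a
coherent set `𝒞`), then `2^h·m ∉ 𝒜(P)` for all `0 ≤ h ≤ k`. -/
theorem stmt10 (P : Polynomial (ZMod 2)) (hP : P.coeff 0 = 1)
    (A : Set ℕ) (hApos : ∀ a ∈ A, 0 < a)
    (hA : ∀ n : ℕ, (partitionCount A n : ZMod 2) = P.coeff n)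
    (C : Set (ZMod (qOf P))) (hC : Coherent (qOf P) C)
    (m : ℕ) (hmpos : 0 < m) (hmodd : Odd m)
    (hfree : ∀ p : ℕ, p.Prime → p ∣ m → ¬ IsBadPrime (qOf P) p)
    (k : ℕ) (hk : omegaS {p : ℕ | p.Prime ∧ (p : ZMod (qOf P)) ∈ C} m = k + 2) :
    ∀ h ≤ k, 2 ^ h * m ∉ A := by
  classical
  intro h hhk hmem
  have hCC : ∀ x ∈ C, ∀ y ∈ C, ∃ i : ℕ, x * y = 2 ^ i := fun x hx y hy => by
    obtain ⟨i, _, hi⟩ := hC.2.2 x hx y hy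
    exact ⟨i, hi⟩
  -- If no exponent `m` qualified, `qOf P` would be the junk value `0`; but then `2` has infinite
  -- order in `ZMod 0 = ℤ`, so that `badE 0` is empty and no coherent set exists.
  have hq : ∀ Q : Polynomial (ZMod 2), Irreducible Q → Q ∣ P → Q ∣ X ^ qOf P - 1 := by
    by_cases hne : {m | 0 < m ∧ ∀ Q : Polynomial (ZMod 2), Irreducible Q → Q ∣ P →
        Q ∣ X ^ m - 1}.Nonempty
    · exact (Nat.sInf_mem hne).2
    · exfalso
      have hq0 : qOf P = 0 := by
        rw [qOf, Set.not_nonempty_iff_eq_empty.1 hne, Nat.sInf_empty]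
      obtain ⟨x, hx⟩ := hC.1
      obtain ⟨i, hi, _⟩ := hC.2.2 x hx x hx
      rw [hq0] at hi
      have h0 : orderOf (2 : ZMod 0) = 0 := by
        rw [orderOf_eq_zero_iff']
        intro n hn h1
        have h2 : (2 : ℤ) ^ n = 1 := h1
        have h3 := one_lt_pow₀ (one_lt_two : (1 : ℤ) < 2) hn.ne'
        omega
      omega
  set S : Set ℕ := {p | p.Prime ∧ p ∣ m ∧
    p ∈ {p : ℕ | p.Prime ∧ (p : ZMod (qOf P)) ∈ C}} with hS
  have hSfin : S.Finite := (Set.finite_le_nat m).subset fun p hp => Nat.le_of_dvd hmpos hp.2.1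
  have hcard : hSfin.toFinset.card = k + 2 := by
    rw [← hk, omegaS, Set.ncard_eq_toFinset_card S hSfin]
  have hzero := mul_dyadicSum_eq_zero P hP A hA (qOf P) hq C hCC h hSfin.toFinset
    (by omega) (fun p hp => ((Set.Finite.mem_toFinset _).1 hp).2.2) m hmodd
    (fun p hp => ((Set.Finite.mem_toFinset _).1 hp).2.1)
  rw [ZMod.intCast_zmod_eq_zero_iff_dvd] at hzero
  have hcop : IsCoprime (((2 ^ (h + 1) : ℕ)) : ℤ) (m : ℤ) :=
    Nat.isCoprime_iff_coprime.2 ((Nat.coprime_two_left.2 hmodd).pow_left _)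
  have hdvd := hcop.dvd_of_dvd_mul_left hzero
  push_cast at hdvd
  obtain ⟨h1, h2⟩ := dyadicSum_pos_lt A h m hmem
  exact absurd (Int.le_of_dvd h1 hdvd) (not_le.2 h2)
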